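/- Let σ be a viable and dynamic execution strategy for Γ_Φ. Let s be any scenario, i ∈ {1, …, n}, and let s′ = s[v/p] be obtained from s by changing the value of any variable p ∈ {x_i, y_i, x_{i+1}, y_{i+1}, …, xₙ, yₙ} to any value v ∈ {0,1}. If [σ(s)]_{B_i} − [σ(s)]_{A_i} ≤ i−1 holds, then for both h = 0 and h = 1 we have [σ(s′)]_{C_i^h} < [σ(s′)]_{B_i} + 1 if and only if [σ(s)]_{C_i^h} < [σ(s)]_{B_i} + 1. -/

import Mathlib

/-!
The scenarios `s` and `s' = s[v/p]` differ only in the value of `p`, so a dynamic strategy cannot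
distinguish them before `p` has been observed: every task scheduled, in one of the two scenarios, no
later than the observation of `p` in `s` has the same time in both (`CSTN.Dynamic.agree`).
For `p = x_k` or `p = y_k` with `k ≥ i`, the unconditional constraints force the observation of `p`
to happen at time at least `A_i + (n + 2)` (`add_le_obs`), whereas the hypothesis on `B_i` gives
`B_i + 1 ≤ A_i + n`. Hence `B_i` has the same time in `s` and `s'`, and if `C_i^h` precedes `B_i + 1`
in one scenario it has the same time in the other.
-/

open Classical

/-- A label over propositional variables `P`: a conjunction of positive or negative
literals over distinct variables, encoded as a partial assignment (`none` means the
variable does not occur in the label). The empty label is `fun _ => none`. -/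
abbrev CLabel (P : Type) := P → Option Bool

/-- The empty label `λ`. -/
def emptyLabel (P : Type) : CLabel P := fun _ => none

/-- A scenario `s` satisfies a label `ℓ` (written `s ⊨ ℓ`). -/
def sats {P : Type} (s : P → Bool) (ℓ : CLabel P) : Prop :=
  ∀ p b, ℓ p = some b → s p = b

/-- A Conditional Simple Temporal Network over tasks `T` and propositional
variables `P`.  A labeled constraint `(X, Y, δ, ℓ)` represents `(Y - X ≤ δ, ℓ)`. -/
structure CSTN (T P : Type) where
  /-- The labeled constraints. -/
  C : Set (T × T × ℝ × CLabel P)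
  Cfin : C.Finite
  /-- The label of each task. -/
  L : T → CLabel P
  /-- The observation tasks. -/
  OT : Set T
  /-- The observation task of each propositional variable. -/
  obs : P → T
  obs_mem : ∀ p, obs p ∈ OT
  obs_inj : Function.Injective obs
  obs_surj : ∀ X ∈ OT, ∃ p, obs p = X
  /-- Restriction WD1. -/
  wd1 : ∀ c ∈ C, ∀ s : P → Bool, sats s c.2.2.2 → sats s (L c.1) ∧ sats s (L c.2.1)

namespace CSTN

variable {T P : Type} (Γ : CSTN T P)

/-- The tasks `𝒯_s` executed in scenario `s` (the tasks of the projection `Γ_s`).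
An execution strategy is encoded as a total function `σ : (P → Bool) → T → ℝ`;
the values `σ s X` for `X ∉ 𝒯_s` are irrelevant. -/
def Tasks (s : P → Bool) : Set T := {X | sats s (Γ.L X)}

/-- The history `Hist(t, s, σ)`: the partial scenario recording the values in `s` of
the propositional variables observed strictly before time `t`. -/
noncomputable def Hist (σ : (P → Bool) → T → ℝ) (t : ℝ) (s : P → Bool) : P → Option Bool :=
  fun p => if Γ.obs p ∈ Γ.Tasks s ∧ σ s (Γ.obs p) < t then some (s p) else none

/-- The execution strategy `σ` is dynamic. -/
def Dynamic (σ : (P → Bool) → T → ℝ) : Prop :=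
  ∀ s s' : P → Bool, ∀ X ∈ Γ.Tasks s,
    Γ.Hist σ (σ s X) s = Γ.Hist σ (σ s X) s' → X ∈ Γ.Tasks s' ∧ σ s' X = σ s X

/-- The execution strategy `σ` is viable: in every scenario `s`, the schedule `σ s`
satisfies all constraints of the projection `Γ_s`. -/
def Viable (σ : (P → Bool) → T → ℝ) : Prop :=
  ∀ s : P → Bool, ∀ c ∈ Γ.C, sats s c.2.2.2 → σ s c.2.1 - σ s c.1 ≤ c.2.2.1

/-- `Γ` is dynamically controllable: it admits a dynamic and viable execution strategy. -/
def DynamicallyControllable : Prop :=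
  ∃ σ : (P → Bool) → T → ℝ, Γ.Dynamic σ ∧ Γ.Viable σ

end CSTN

/-! ### The reduction from Q3SAT: the CSTN `Γ_Φ` -/

/-- A literal of the Q3SAT formula: a variable `x i` (`Sum.inl i`) or `y i`
(`Sum.inr i`) together with its sign (`true` = positive occurrence). -/
abbrev QLit (n : ℕ) := (Fin n ⊕ Fin n) × Bool

/-- A clause `l₁ ∨ l₂ ∨ l₃` of the 3CNF `φ`. -/
abbrev QClause (n : ℕ) := QLit n × QLit n × QLit n

/-- The propositional variables `x i`, `y i`, `c i ⁰`, `c i ¹` of `Γ_Φ` (0-based). -/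
inductive PhiVar (n : ℕ) where
  | x (i : Fin n) | y (i : Fin n) | c0 (i : Fin n) | c1 (i : Fin n)
deriving DecidableEq

/-- The tasks of `Γ_Φ` (0-based: paper's `A_i`, `i = 1, …, n+1`, is `A ⟨i-1⟩`). -/
inductive PhiTask (n : ℕ) where
  | A (i : Fin (n + 1)) | B (i : Fin (n + 1))
  | C0 (i : Fin n) | C1 (i : Fin n) | D (i : Fin n)
  | X (i : Fin n) | Y (i : Fin n)
deriving DecidableEq

/-- The propositional variable on which a literal occurs. -/
def litVar {n : ℕ} (l : QLit n) : PhiVar n :=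
  match l.1 with
  | .inl i => .x i
  | .inr i => .y i

/-- The literals of a clause occur on pairwise distinct variables
(so that `ℓ_j = ¬l₁ ∧ ¬l₂ ∧ ¬l₃` is a well-formed label). -/
def GoodClause {n : ℕ} (c : QClause n) : Prop :=
  litVar c.1 ≠ litVar c.2.1 ∧ litVar c.1 ≠ litVar c.2.2 ∧ litVar c.2.1 ≠ litVar c.2.2

/-- A literal evaluates to true under an assignment. -/
def evalLit {n : ℕ} (s : PhiVar n → Bool) (l : QLit n) : Prop := s (litVar l) = l.2

/-- A clause evaluates to true under an assignment. -/
def evalClause {n : ℕ} (s : PhiVar n → Bool) (c : QClause n) : Prop :=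
  evalLit s c.1 ∨ evalLit s c.2.1 ∨ evalLit s c.2.2

/-- The 3CNF `φ` evaluates to true under an assignment. -/
def evalCNF {n m : ℕ} (cl : Fin m → QClause n) (s : PhiVar n → Bool) : Prop :=
  ∀ j, evalClause s (cl j)

/-- The label consisting of the single literal forcing `p` to `b`. -/
def singleLabel {n : ℕ} (p : PhiVar n) (b : Bool) : CLabel (PhiVar n) :=
  fun q => if q = p then some b else none

/-- The label conjunction of two literals. -/
def pairLabel {n : ℕ} (p : PhiVar n) (bp : Bool) (q : PhiVar n) (bq : Bool) :
    CLabel (PhiVar n) :=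
  fun r => if r = p then some bp else if r = q then some bq else none

/-- The label `ℓ_j := ¬l_{j,1} ∧ ¬l_{j,2} ∧ ¬l_{j,3}`, the negation of the clause. -/
def clauseLabel {n : ℕ} (c : QClause n) : CLabel (PhiVar n) :=
  fun q =>
    if q = litVar c.1 then some (!c.1.2)
    else if q = litVar c.2.1 then some (!c.2.1.2)
    else if q = litVar c.2.2 then some (!c.2.2.2)
    else none

/-- `𝒪(x i) = X i`, `𝒪(y i) = Y i`, `𝒪(c i ⁰) = C i ⁰`, `𝒪(c i ¹) = C i ¹`. -/
def phiObs (n : ℕ) : PhiVar n → PhiTask n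
  | .x i => .X i
  | .y i => .Y i
  | .c0 i => .C0 i
  | .c1 i => .C1 i

abbrev PhiCon (n : ℕ) := PhiTask n × PhiTask n × ℝ × CLabel (PhiVar n)

/-- The seven constraints of the `i`-th gadget (as `(X, Y, δ, ℓ)` meaning `Y - X ≤ δ`):
`(D_i ≤ B_i + 1, c_i⁰ ∧ c_i¹)`, `(D_i ≥ A_i + (n+2), ¬c_i⁰ ∧ ¬c_i¹)`,
`(X_i ≥ A_i + (n+2), λ)`, `(Y_i ≥ X_i + 1, λ)`, `(A_{i+1} ≥ Y_i + 1, λ)`,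
`(B_{i+1} ≤ C_i⁰ + (n+4), ¬x_i)`, `(B_{i+1} ≤ C_i¹ + (n+4), x_i)`. -/
def gadget (n : ℕ) (i : Fin n) : Set (PhiCon n) :=
  {(.B i.castSucc, .D i, 1, pairLabel (.c0 i) true (.c1 i) true),
   (.D i, .A i.castSucc, -((n : ℝ) + 2), pairLabel (.c0 i) false (.c1 i) false),
   (.X i, .A i.castSucc, -((n : ℝ) + 2), emptyLabel _),
   (.Y i, .X i, -1, emptyLabel _),
   (.A i.succ, .Y i, -1, emptyLabel _),
   (.C0 i, .B i.succ, (n : ℝ) + 4, singleLabel (.x i) false),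
   (.C1 i, .B i.succ, (n : ℝ) + 4, singleLabel (.x i) true)}

/-- The constraints of `Γ_Φ`: `(B₁ - A₁ ≤ 0, λ)`, the gadget constraints, and the
clause constraints `(B_{n+1} - A_{n+1} ≥ n+1, ℓ_j)` for `j = 1, …, m`. -/
def PhiC (n m : ℕ) (cl : Fin m → QClause n) : Set (PhiCon n) :=
  insert (.A 0, .B 0, (0 : ℝ), emptyLabel _)
    ((⋃ i : Fin n, gadget n i) ∪
     (⋃ j : Fin m,
       {(.B (Fin.last n), .A (Fin.last n), -((n : ℝ) + 1), clauseLabel (cl j))}))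

/-- The CSTN `Γ_Φ` associated to the Q3SAT formula
`Φ = ∃x₁∀y₁ ⋯ ∃xₙ∀yₙ ⋀_{j=1}^m (l_{j,1} ∨ l_{j,2} ∨ l_{j,3})`. -/
def GammaPhi (n m : ℕ) (cl : Fin m → QClause n) : CSTN (PhiTask n) (PhiVar n) where
  C := PhiC n m cl
  Cfin := by
    apply Set.Finite.insert
    apply Set.Finite.union
    · exact Set.finite_iUnion fun i =>
        (((((((Set.finite_singleton _).insert _).insert _).insert _).insert
          _).insert _).insert _)
    · exact Set.finite_iUnion fun j => Set.finite_singleton _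
  L := fun _ => emptyLabel _
  OT := Set.range (phiObs n)
  obs := phiObs n
  obs_mem := fun p => ⟨p, rfl⟩
  obs_inj := by
    intro p q hpq
    cases p <;> cases q <;> simp_all [phiObs]
  obs_surj := fun _ hX => hX
  wd1 := by
    intro c _ s _
    constructor <;> · intro p b hb; simp [emptyLabel] at hb

/-- In a network executing every task in every scenario, two scenarios differing at most at `p`
receive the same schedule up to and including the time at which `p` is observed in the first of
them. An earliest task violating this would see the same history in both scenarios. -/
theorem CSTN.Dynamic.agree {T P : Type} [Finite T] {Γ : CSTN T P}
    {σ : (P → Bool) → T → ℝ} (hdyn : Γ.Dynamic σ) (hT : ∀ s X, X ∈ Γ.Tasks s)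
    {s s' : P → Bool} {p : P} (hs : ∀ q, q ≠ p → s q = s' q)
    {X : T} (hX : min (σ s X) (σ s' X) ≤ σ s (Γ.obs p)) : σ s X = σ s' X := by
  by_contra hne
  -- `Z` is a task, scheduled earliest among those on which the two schedules disagree.
  obtain ⟨Z, hZne, hZmin⟩ := Set.exists_min_image {Z : T | σ s Z ≠ σ s' Z}
    (fun Z => min (σ s Z) (σ s' Z)) (Set.toFinite _) ⟨X, hne⟩
  have hZp : min (σ s Z) (σ s' Z) ≤ σ s (Γ.obs p) := (hZmin X hne).trans hX
  have hHist : Γ.Hist σ (min (σ s Z) (σ s' Z)) s = Γ.Hist σ (min (σ s Z) (σ s' Z)) s' := by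
    funext q
    simp only [CSTN.Hist, hT, true_and]
    by_cases hq : σ s (Γ.obs q) = σ s' (Γ.obs q)
    · rw [← hq]
      split_ifs with hlt
      · rw [hs q (by rintro rfl; exact hlt.not_ge hZp)]
      · rfl
    · have hle := hZmin (Γ.obs q) hq
      rw [if_neg (not_lt.2 (hle.trans (min_le_left _ _))),
        if_neg (not_lt.2 (hle.trans (min_le_right _ _)))]
  rcases le_total (σ s Z) (σ s' Z) with h | h
  · rw [min_eq_left h] at hHist
    exact hZne (hdyn s s' Z (hT _ _) hHist).2.symm
  · rw [min_eq_right h] at hHist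
    exact hZne (hdyn s' s Z (hT _ _) hHist.symm).2

instance PhiTask.instFinite (n : ℕ) : Finite (PhiTask n) := by
  let f : (Fin (n + 1) ⊕ Fin (n + 1)) ⊕ (Fin n ⊕ Fin n) ⊕ Fin n ⊕ Fin n ⊕ Fin n → PhiTask n :=
    Sum.elim (Sum.elim .A .B)
      (Sum.elim (Sum.elim .C0 .C1) (Sum.elim .D (Sum.elim .X .Y)))
  refine Finite.of_surjective f ?_
  rintro (j | j | j | j | j | j | j)
  · exact ⟨.inl (.inl j), rfl⟩
  · exact ⟨.inl (.inr j), rfl⟩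
  · exact ⟨.inr (.inl (.inl j)), rfl⟩
  · exact ⟨.inr (.inl (.inr j)), rfl⟩
  · exact ⟨.inr (.inr (.inl j)), rfl⟩
  · exact ⟨.inr (.inr (.inr (.inl j))), rfl⟩
  · exact ⟨.inr (.inr (.inr (.inr j))), rfl⟩

theorem sats_emptyLabel {P : Type} (s : P → Bool) : sats s (emptyLabel P) := by
  intro p b h
  simp [emptyLabel] at h

section Viable

variable {n m : ℕ} {cl : Fin m → QClause n} {σ : (PhiVar n → Bool) → PhiTask n → ℝ}

theorem gadget_le (hv : (GammaPhi n m cl).Viable σ) (s : PhiVar n → Bool) (k : Fin n)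
    {U V : PhiTask n} {δ : ℝ} (hc : (U, V, δ, emptyLabel _) ∈ gadget n k) :
    σ s V - σ s U ≤ δ :=
  hv s (U, V, δ, emptyLabel _) (Or.inr (Or.inl (Set.mem_iUnion.2 ⟨k, hc⟩))) (sats_emptyLabel s)

theorem A_add_le_X (hv : (GammaPhi n m cl).Viable σ) (s : PhiVar n → Bool) (k : Fin n) :
    σ s (.A k.castSucc) + (n + 2) ≤ σ s (.X k) := by
  have := gadget_le hv s k (U := .X k) (V := .A k.castSucc) (δ := -((n : ℝ) + 2))
    (by simp [gadget])
  linarith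

theorem X_add_le_Y (hv : (GammaPhi n m cl).Viable σ) (s : PhiVar n → Bool) (k : Fin n) :
    σ s (.X k) + 1 ≤ σ s (.Y k) := by
  have := gadget_le hv s k (U := .Y k) (V := .X k) (δ := -1) (by simp [gadget])
  linarith

theorem Y_add_le_A (hv : (GammaPhi n m cl).Viable σ) (s : PhiVar n → Bool) (k : Fin n) :
    σ s (.Y k) + 1 ≤ σ s (.A k.succ) := by
  have := gadget_le hv s k (U := .A k.succ) (V := .Y k) (δ := -1) (by simp [gadget])
  linarith

theorem monotone_A (hv : (GammaPhi n m cl).Viable σ) (s : PhiVar n → Bool) :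
    Monotone fun j => σ s (.A j) := by
  refine Fin.monotone_iff_le_succ.2 fun k => ?_
  have h₁ := A_add_le_X hv s k
  have h₂ := X_add_le_Y hv s k
  have h₃ := Y_add_le_A hv s k
  have hn : (0 : ℝ) ≤ n := n.cast_nonneg
  linarith

theorem add_le_obs (hv : (GammaPhi n m cl).Viable σ) (s : PhiVar n → Bool) {i : Fin n}
    {p : PhiVar n} (hp : ∃ k : Fin n, i ≤ k ∧ (p = PhiVar.x k ∨ p = PhiVar.y k)) :
    σ s (.A i.castSucc) + (n + 2) ≤ σ s ((GammaPhi n m cl).obs p) := by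
  obtain ⟨k, hik, hpk⟩ := hp
  have hA : σ s (.A i.castSucc) ≤ σ s (.A k.castSucc) :=
    monotone_A hv s (Fin.castSucc_le_castSucc_iff.2 hik)
  have hX := A_add_le_X hv s k
  have hY := X_add_le_Y hv s k
  rcases hpk with rfl | rfl
  · change _ ≤ σ s (.X k)
    linarith
  · change _ ≤ σ s (.Y k)
    linarith

end Viable

/-- **Lemma 5, second part.** Let `σ` be viable and dynamic for `Γ_Φ`, `s` a
scenario, `i : Fin n` (0-based: the paper's gadget index `i ∈ {1, …, n}`, so the
paper's bound `i - 1` is `i.val`), and `s' = s[v/p]` for any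
`p ∈ {x_i, y_i, …, x_n, y_n}` and `v ∈ {0,1}`. If
`[σ(s)]_{B_i} - [σ(s)]_{A_i} ≤ i - 1`, then for both `h = 0` and `h = 1`:
`[σ(s')]_{C_i^h} < [σ(s')]_{B_i} + 1 ↔ [σ(s)]_{C_i^h} < [σ(s)]_{B_i} + 1`. -/
theorem gammaPhi_future_vars_choice (n m : ℕ) (hn : 1 ≤ n) (hm : 1 ≤ m)
    (cl : Fin m → QClause n) (hgood : ∀ j, GoodClause (cl j))
    (σ : (PhiVar n → Bool) → PhiTask n → ℝ)
    (hviable : (GammaPhi n m cl).Viable σ) (hdyn : (GammaPhi n m cl).Dynamic σ)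
    (s : PhiVar n → Bool) (i : Fin n) (p : PhiVar n)
    (hp : ∃ k : Fin n, i ≤ k ∧ (p = PhiVar.x k ∨ p = PhiVar.y k)) (v : Bool)
    (hact : σ s (.B i.castSucc) - σ s (.A i.castSucc) ≤ (i.val : ℝ)) :
    ∀ h : Bool,
      (σ (Function.update s p v) (cond h (.C1 i) (.C0 i)) <
        σ (Function.update s p v) (.B i.castSucc) + 1) ↔
      (σ s (cond h (.C1 i) (.C0 i)) < σ s (.B i.castSucc) + 1) := by
  intro h
  have hin : (i.val : ℝ) < n := by exact_mod_cast i.isLt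
  have hobs := add_le_obs hviable s hp
  have hagree : ∀ U, min (σ s U) (σ (Function.update s p v) U) ≤
      σ s ((GammaPhi n m cl).obs p) → σ s U = σ (Function.update s p v) U := fun U hU =>
    hdyn.agree (fun s _ => sats_emptyLabel s)
      (fun q hq => (Function.update_of_ne hq v s).symm) hU
  have hB := hagree (.B i.castSucc) (min_le_of_left_le (by linarith))
  rw [← hB]
  constructor <;> intro hC
  · rwa [hagree _ (min_le_of_right_le (by linarith))]
  · rwa [← hagree _ (min_le_of_left_le (by linarith))]
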